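/- There exists a unique ℂ-linear anti-homomorphism S : H(32) → H(32) satisfying S(a) = a, S(x) = −x(p₊ + i·p₋) and S(y) = −y(p₊ − i·p₋). Moreover S²(x) = i·x, S²(y) = −i·y, S²(a) = a, and consequently S⁴(u) = a u a for all u ∈ H(32), i.e., S⁴ is the inner automorphism Ad(a) (note a = a⁻¹ since a² = 1). -/

import Mathlib

noncomputable section

open scoped TensorProduct

/-- The three generators of `H(32)`. -/
inductive HGen : Type
  | a : HGen
  | x : HGen
  | y : HGen

open FreeAlgebra

/-- The defining relations of `H(32)` (for `i` a fixed primitive 4th root of unity):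
`a² = 1`, `ax = -xa`, `ay = -ya`, `x⁴ = 0`, `y⁴ = 0`, `xy = -i·yx`. -/
inductive HRel (i : ℂ) : FreeAlgebra ℂ HGen → FreeAlgebra ℂ HGen → Prop
  | aSq : HRel i ((ι ℂ HGen.a) ^ 2) 1
  | ax : HRel i (ι ℂ HGen.a * ι ℂ HGen.x) (-(ι ℂ HGen.x * ι ℂ HGen.a))
  | ay : HRel i (ι ℂ HGen.a * ι ℂ HGen.y) (-(ι ℂ HGen.y * ι ℂ HGen.a))
  | xQuart : HRel i ((ι ℂ HGen.x) ^ 4) 0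
  | yQuart : HRel i ((ι ℂ HGen.y) ^ 4) 0
  | xy : HRel i (ι ℂ HGen.x * ι ℂ HGen.y) (-(i • (ι ℂ HGen.y * ι ℂ HGen.x)))

/-- The algebra `H(32)`. -/
abbrev H32 (i : ℂ) : Type := RingQuot (HRel i)

/-- The image of the generator `a` in `H(32)`. -/
def H32.a (i : ℂ) : H32 i := RingQuot.mkAlgHom ℂ (HRel i) (ι ℂ HGen.a)

/-- The image of the generator `x` in `H(32)`. -/
def H32.x (i : ℂ) : H32 i := RingQuot.mkAlgHom ℂ (HRel i) (ι ℂ HGen.x)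

/-- The image of the generator `y` in `H(32)`. -/
def H32.y (i : ℂ) : H32 i := RingQuot.mkAlgHom ℂ (HRel i) (ι ℂ HGen.y)

/-- `p₊ = (1+a)/2`. -/
def H32.pp (i : ℂ) : H32 i := (2 : ℂ)⁻¹ • (1 + H32.a i)

/-- `p₋ = (1-a)/2`. -/
def H32.pm (i : ℂ) : H32 i := (2 : ℂ)⁻¹ • (1 - H32.a i)

theorem H32.neg_norm {i : ℂ} (u : H32 i) : -u = (-1 : ℂ) • u :=
  (neg_one_smul ℂ u).symm

theorem H32.sub_norm {i : ℂ} (u v : H32 i) : u - v = u + (-1 : ℂ) • v := by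
  rw [← H32.neg_norm]; exact sub_eq_add_neg u v

theorem H32.induct (i : ℂ) (P : H32 i → Prop)
    (h0 : ∀ r : ℂ, P (algebraMap ℂ (H32 i) r))
    (ha : P (H32.a i)) (hx : P (H32.x i)) (hy : P (H32.y i))
    (hmul : ∀ u v, P u → P v → P (u * v)) (hadd : ∀ u v, P u → P v → P (u + v))
    (u : H32 i) : P u := by
  obtain ⟨w, rfl⟩ := RingQuot.mkAlgHom_surjective ℂ (HRel i) u
  induction w using FreeAlgebra.induction with
  | grade0 r => simpa using h0 r
  | grade1 g => cases g <;> assumption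
  | mul u v hu hv => rw [map_mul]; exact hmul _ _ hu hv
  | add u v hu hv => rw [map_add]; exact hadd _ _ hu hv

/-- `g = p₊ + i p₋`. -/
def H32.g (i : ℂ) : H32 i := H32.pp i + i • H32.pm i

/-- `h = p₊ - i p₋`. -/
def H32.h (i : ℂ) : H32 i := H32.pp i - i • H32.pm i

theorem H32.aa (i : ℂ) : H32.a i * H32.a i = 1 := by
  have := RingQuot.mkAlgHom_rel ℂ (HRel.aSq (i := i))
  rwa [map_pow, map_one, pow_two] at this

theorem H32.ax (i : ℂ) : H32.a i * H32.x i = (-1 : ℂ) • (H32.x i * H32.a i) := by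
  rw [← H32.neg_norm]
  have := RingQuot.mkAlgHom_rel ℂ (HRel.ax (i := i))
  rwa [map_neg, map_mul, map_mul] at this

theorem H32.ay (i : ℂ) : H32.a i * H32.y i = (-1 : ℂ) • (H32.y i * H32.a i) := by
  rw [← H32.neg_norm]
  have := RingQuot.mkAlgHom_rel ℂ (HRel.ay (i := i))
  rwa [map_neg, map_mul, map_mul] at this

theorem H32.xy (i : ℂ) : H32.x i * H32.y i = (-i) • (H32.y i * H32.x i) := by
  rw [← neg_one_mul i, mul_smul, ← H32.neg_norm]
  have := RingQuot.mkAlgHom_rel ℂ (HRel.xy (i := i))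
  rwa [map_neg, map_smul, map_mul, map_mul] at this

theorem H32.x4 (i : ℂ) : H32.x i ^ 4 = 0 := by
  have := RingQuot.mkAlgHom_rel ℂ (HRel.xQuart (i := i))
  rwa [map_pow, map_zero] at this

theorem H32.y4 (i : ℂ) : H32.y i ^ 4 = 0 := by
  have := RingQuot.mkAlgHom_rel ℂ (HRel.yQuart (i := i))
  rwa [map_pow, map_zero] at this

theorem H32.ii {i : ℂ} (hi : IsPrimitiveRoot i 4) : i * i = -1 := by
  have h2 : IsPrimitiveRoot (i ^ 2) 2 := hi.pow (by norm_num) (by norm_num)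
  rw [← pow_two]; exact h2.eq_neg_one_of_two_right

theorem H32.g_comm {i : ℂ} (hii : i * i = -1) (z : H32 i)
    (hz : H32.a i * z = (-1 : ℂ) • (z * H32.a i)) : H32.g i * z = i • (z * H32.h i) := by
  simp only [H32.g, H32.h, H32.pp, H32.pm, H32.sub_norm, add_mul, mul_add, smul_mul_assoc,
    mul_smul_comm, hz, one_mul, mul_one, smul_add, smul_smul]
  match_scalars <;>
    first
    | linear_combination (2:ℂ)⁻¹ * hii
    | linear_combination (-(2:ℂ)⁻¹) * hii

theorem H32.h_comm {i : ℂ} (hii : i * i = -1) (z : H32 i)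
    (hz : H32.a i * z = (-1 : ℂ) • (z * H32.a i)) : H32.h i * z = (-i) • (z * H32.g i) := by
  simp only [H32.g, H32.h, H32.pp, H32.pm, H32.sub_norm, add_mul, mul_add, smul_mul_assoc,
    mul_smul_comm, hz, one_mul, mul_one, smul_add, smul_smul]
  match_scalars <;>
    first
    | linear_combination (2:ℂ)⁻¹ * hii
    | linear_combination (-(2:ℂ)⁻¹) * hii

theorem H32.gh {i : ℂ} (hii : i * i = -1) : H32.g i * H32.h i = 1 := by
  simp only [H32.g, H32.h, H32.pp, H32.pm, H32.sub_norm, add_mul, mul_add, smul_mul_assoc,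
    mul_smul_comm, H32.aa, one_mul, mul_one, smul_add, smul_smul]
  match_scalars <;>
    first
    | linear_combination (2:ℂ)⁻¹ * hii
    | linear_combination (-(2:ℂ)⁻¹) * hii

theorem H32.hg {i : ℂ} (hii : i * i = -1) : H32.h i * H32.g i = 1 := by
  simp only [H32.g, H32.h, H32.pp, H32.pm, H32.sub_norm, add_mul, mul_add, smul_mul_assoc,
    mul_smul_comm, H32.aa, one_mul, mul_one, smul_add, smul_smul]
  match_scalars <;>
    first
    | linear_combination (2:ℂ)⁻¹ * hii
    | linear_combination (-(2:ℂ)⁻¹) * hii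

theorem H32.gg {i : ℂ} (hii : i * i = -1) : H32.g i * H32.g i = H32.a i := by
  simp only [H32.g, H32.h, H32.pp, H32.pm, H32.sub_norm, add_mul, mul_add, smul_mul_assoc,
    mul_smul_comm, H32.aa, one_mul, mul_one, smul_add, smul_smul]
  match_scalars
  · linear_combination ((2:ℂ)⁻¹) * hii
  · linear_combination (-(2:ℂ)⁻¹) * hii

theorem H32.hh {i : ℂ} (hii : i * i = -1) : H32.h i * H32.h i = H32.a i := by
  simp only [H32.g, H32.h, H32.pp, H32.pm, H32.sub_norm, add_mul, mul_add, smul_mul_assoc,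
    mul_smul_comm, H32.aa, one_mul, mul_one, smul_add, smul_smul]
  match_scalars
  · linear_combination ((2:ℂ)⁻¹) * hii
  · linear_combination (-(2:ℂ)⁻¹) * hii

theorem H32.ag (i : ℂ) : H32.a i * H32.g i = H32.g i * H32.a i := by
  simp only [H32.g, H32.pp, H32.pm, H32.sub_norm, add_mul, mul_add, smul_mul_assoc,
    mul_smul_comm, one_mul, mul_one]

theorem H32.ah (i : ℂ) : H32.a i * H32.h i = H32.h i * H32.a i := by
  simp only [H32.h, H32.pp, H32.pm, H32.sub_norm, add_mul, mul_add, smul_mul_assoc,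
    mul_smul_comm, one_mul, mul_one]

theorem H32.xg_sq {i : ℂ} (hii : i * i = -1) (z : H32 i)
    (hz : H32.a i * z = (-1 : ℂ) • (z * H32.a i)) :
    (z * H32.g i) * (z * H32.g i) = i • (z * z) := by
  rw [mul_assoc, ← mul_assoc (H32.g i), H32.g_comm hii z hz, smul_mul_assoc, mul_assoc z (H32.h i),
    H32.hg hii, mul_one, mul_smul_comm]

theorem H32.yh_sq {i : ℂ} (hii : i * i = -1) (z : H32 i)
    (hz : H32.a i * z = (-1 : ℂ) • (z * H32.a i)) :
    (z * H32.h i) * (z * H32.h i) = (-i) • (z * z) := by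
  rw [mul_assoc, ← mul_assoc (H32.h i), H32.h_comm hii z hz, smul_mul_assoc,
    mul_assoc z (H32.g i), H32.gh hii, mul_one, mul_smul_comm]

theorem H32.a_mul_xg (i : ℂ) (z w : H32 i) (hz : H32.a i * z = (-1 : ℂ) • (z * H32.a i))
    (hw : H32.a i * w = w * H32.a i) :
    H32.a i * (z * w) = (-1 : ℂ) • (z * w * H32.a i) := by
  rw [← mul_assoc, hz, smul_mul_assoc, mul_assoc, hw, mul_assoc]

/-- The values of the antipode on generators. -/
def H32.genS (i : ℂ) : HGen → (H32 i)ᵐᵒᵖ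
  | HGen.a => MulOpposite.op (H32.a i)
  | HGen.x => MulOpposite.op (-(H32.x i * H32.g i))
  | HGen.y => MulOpposite.op (-(H32.y i * H32.h i))

theorem H32.genS_rel {i : ℂ} (hii : i * i = -1) ⦃u v : FreeAlgebra ℂ HGen⦄ (h : HRel i u v) :
    FreeAlgebra.lift ℂ (H32.genS i) u = FreeAlgebra.lift ℂ (H32.genS i) v := by
  apply MulOpposite.unop_injective
  cases h with
  | aSq => simp [H32.genS, pow_two, H32.aa]
  | ax =>
    simp only [map_mul, map_neg, FreeAlgebra.lift_ι_apply, H32.genS, MulOpposite.unop_mul,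
      MulOpposite.unop_neg, MulOpposite.unop_op, H32.neg_norm, smul_mul_assoc, mul_smul_comm]
    rw [H32.a_mul_xg i _ _ (H32.ax i) (H32.ag i), smul_smul, smul_smul]
    congr 1; norm_num
  | ay =>
    simp only [map_mul, map_neg, FreeAlgebra.lift_ι_apply, H32.genS, MulOpposite.unop_mul,
      MulOpposite.unop_neg, MulOpposite.unop_op, H32.neg_norm, smul_mul_assoc, mul_smul_comm]
    rw [H32.a_mul_xg i _ _ (H32.ay i) (H32.ah i), smul_smul, smul_smul]
    congr 1; norm_num
  | xQuart =>
    simp only [map_pow, map_zero, FreeAlgebra.lift_ι_apply, H32.genS, MulOpposite.unop_pow,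
      MulOpposite.unop_zero, MulOpposite.unop_op]
    have e : (-(H32.x i * H32.g i)) ^ 4
        = ((H32.x i * H32.g i) * (H32.x i * H32.g i)) ^ 2 := by
      rw [H32.neg_norm, smul_pow, ← pow_two, ← pow_mul]; norm_num
    rw [e, H32.xg_sq hii _ (H32.ax i), smul_pow, ← pow_two, ← pow_mul, H32.x4, smul_zero]
  | yQuart =>
    simp only [map_pow, map_zero, FreeAlgebra.lift_ι_apply, H32.genS, MulOpposite.unop_pow,
      MulOpposite.unop_zero, MulOpposite.unop_op]
    have e : (-(H32.y i * H32.h i)) ^ 4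
        = ((H32.y i * H32.h i) * (H32.y i * H32.h i)) ^ 2 := by
      rw [H32.neg_norm, smul_pow, ← pow_two, ← pow_mul]; norm_num
    rw [e, H32.yh_sq hii _ (H32.ay i), smul_pow, ← pow_two, ← pow_mul, H32.y4, smul_zero]
  | xy =>
    simp only [map_mul, map_neg, map_smul, FreeAlgebra.lift_ι_apply, H32.genS,
      MulOpposite.unop_mul, MulOpposite.unop_smul,
      MulOpposite.unop_neg, MulOpposite.unop_op, H32.neg_norm, smul_mul_assoc, mul_smul_comm]
    have e1 : H32.y i * H32.h i * (H32.x i * H32.g i)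
        = (-i) • (H32.y i * H32.x i * H32.a i) := by
      rw [mul_assoc, ← mul_assoc (H32.h i), H32.h_comm hii _ (H32.ax i), smul_mul_assoc,
        mul_assoc (H32.x i), H32.gg hii, mul_smul_comm, mul_assoc]
    have e2 : H32.x i * H32.g i * (H32.y i * H32.h i)
        = i • (H32.x i * H32.y i * H32.a i) := by
      rw [mul_assoc, ← mul_assoc (H32.g i), H32.g_comm hii _ (H32.ay i), smul_mul_assoc,
        mul_assoc (H32.y i), H32.hh hii, mul_smul_comm, mul_assoc]
    rw [e1, e2, H32.xy, smul_mul_assoc]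
    simp only [smul_smul]
    congr 1
    linear_combination (-i) * hii

/-- The antipode as an algebra map to the opposite algebra. -/
def H32.Sop {i : ℂ} (hii : i * i = -1) : H32 i →ₐ[ℂ] (H32 i)ᵐᵒᵖ :=
  RingQuot.liftAlgHom ℂ ⟨FreeAlgebra.lift ℂ (H32.genS i), H32.genS_rel hii⟩

theorem H32.Sop_mk {i : ℂ} (hii : i * i = -1) (z : HGen) :
    H32.Sop hii (RingQuot.mkAlgHom ℂ (HRel i) (ι ℂ z)) = H32.genS i z := by
  rw [H32.Sop, RingQuot.liftAlgHom_mkAlgHom_apply, FreeAlgebra.lift_ι_apply]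

/-- There is a unique ℂ-linear anti-homomorphism `S` of `H(32)` with `S(a) = a`,
`S(x) = -x(p₊ + i p₋)`, `S(y) = -y(p₊ - i p₋)`; moreover `S²(x) = i x`,
`S²(y) = -i y`, `S²(a) = a`, and `S⁴ = Ad(a)` (note `a = a⁻¹`). -/
theorem H32_antipode (i : ℂ) (hi : IsPrimitiveRoot i 4) :
    (∃! S : H32 i →ₗ[ℂ] H32 i,
      S 1 = 1 ∧ (∀ u v : H32 i, S (u * v) = S v * S u) ∧
      S (H32.a i) = H32.a i ∧
      S (H32.x i) = -(H32.x i * (H32.pp i + i • H32.pm i)) ∧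
      S (H32.y i) = -(H32.y i * (H32.pp i - i • H32.pm i))) ∧
    (∀ S : H32 i →ₗ[ℂ] H32 i,
      S 1 = 1 → (∀ u v : H32 i, S (u * v) = S v * S u) →
      S (H32.a i) = H32.a i →
      S (H32.x i) = -(H32.x i * (H32.pp i + i • H32.pm i)) →
      S (H32.y i) = -(H32.y i * (H32.pp i - i • H32.pm i)) →
      S (S (H32.x i)) = i • H32.x i ∧
      S (S (H32.y i)) = -(i • H32.y i) ∧
      S (S (H32.a i)) = H32.a i ∧
      ∀ u : H32 i, (⇑S)^[4] u = H32.a i * u * H32.a i) := by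
  have hii := H32.ii hi
  have hS1 : ∀ S : H32 i →ₗ[ℂ] H32 i, S 1 = 1 →
      ∀ r : ℂ, S (algebraMap ℂ (H32 i) r) = algebraMap ℂ (H32 i) r := by
    intro S h r
    rw [Algebra.algebraMap_eq_smul_one, map_smul, h]
  refine ⟨?_, ?_⟩
  · refine ⟨(MulOpposite.opLinearEquiv ℂ).symm.toLinearMap ∘ₗ (H32.Sop hii).toLinearMap,
      ⟨?_, ?_, ?_, ?_, ?_⟩, ?_⟩
    · simp
    · intro u v
      simp
    · exact congrArg MulOpposite.unop (H32.Sop_mk hii HGen.a)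
    · exact congrArg MulOpposite.unop (H32.Sop_mk hii HGen.x)
    · exact congrArg MulOpposite.unop (H32.Sop_mk hii HGen.y)
    · rintro T ⟨h1, hm, ha, hx, hy⟩
      ext u
      induction u using H32.induct with
      | h0 r => rw [hS1 T h1, hS1]; simp
      | ha => rw [ha]; exact (congrArg MulOpposite.unop (H32.Sop_mk hii HGen.a)).symm
      | hx => rw [hx]; exact (congrArg MulOpposite.unop (H32.Sop_mk hii HGen.x)).symm
      | hy => rw [hy]; exact (congrArg MulOpposite.unop (H32.Sop_mk hii HGen.y)).symm
      | hmul u v hu hv => rw [hm, hu, hv]; simp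
      | hadd u v hu hv => rw [map_add, map_add, hu, hv]
  · intro S h1 hm ha hx hy
    have hpp : S (H32.pp i) = H32.pp i := by simp [H32.pp, h1, ha]
    have hpm : S (H32.pm i) = H32.pm i := by simp [H32.pm, h1, ha]
    have hx2 : S (S (H32.x i)) = i • H32.x i := by
      rw [hx, map_neg, hm, map_add, map_smul, hpp, hpm, hx]
      change -(H32.g i * -(H32.x i * H32.g i)) = _
      simp only [H32.neg_norm]
      rw [mul_smul_comm, smul_smul, neg_one_mul, neg_neg, one_smul, ← mul_assoc, H32.g_comm hii _ (H32.ax i), smul_mul_assoc, mul_assoc,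
        H32.hg hii, mul_one]
    have hy2 : S (S (H32.y i)) = -(i • H32.y i) := by
      rw [hy, map_neg, hm, map_sub, map_smul, hpp, hpm, hy]
      change -(H32.h i * -(H32.y i * H32.h i)) = _
      simp only [H32.neg_norm]
      rw [mul_smul_comm, smul_smul, neg_one_mul, neg_neg, one_smul, ← mul_assoc, H32.h_comm hii _ (H32.ay i), smul_mul_assoc,
        mul_assoc, H32.gh hii, mul_one, smul_smul, neg_one_mul]
    refine ⟨hx2, hy2, by rw [ha, ha], ?_⟩
    intro u
    change S (S (S (S u))) = _
    induction u using H32.induct with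
    | h0 r =>
      simp only [hS1 S h1]
      rw [← Algebra.commutes, mul_assoc, H32.aa, mul_one]
    | ha => simp only [ha]; rw [H32.aa, one_mul]
    | hx =>
      rw [hx2, map_smul, map_smul, hx2, smul_smul, hii, H32.ax, smul_mul_assoc, mul_assoc, H32.aa,
        mul_one]
    | hy =>
      simp only [H32.neg_norm] at hy2
      rw [hy2, map_smul, map_smul, map_smul, map_smul, hy2,
        H32.ay, smul_mul_assoc, mul_assoc, H32.aa, mul_one]
      simp only [smul_smul]
      congr 1
      linear_combination hii
    | hmul u v hu hv =>
      rw [hm, hm, hm, hm, hu, hv]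
      have e : H32.a i * u * H32.a i * (H32.a i * v * H32.a i)
          = H32.a i * u * (H32.a i * H32.a i) * v * H32.a i := by simp only [mul_assoc]
      rw [e, H32.aa, mul_one, mul_assoc (H32.a i) u v]
    | hadd u v hu hv => simp only [map_add, hu, hv, mul_add, add_mul]
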